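/- Let p be a prime and E a group of type E(2) of order p^{2m+2}, i.e. E has subgroups H and K with H extraspecial of order p^{2m+1}, K cyclic of order p^2, every element of H commuting with every element of K, E = HK, and H ∩ K = Z(H). Then the Schur multiplier of E has order p^{2m^2 + m - 1}. -/

import Mathlib

/-- The kernel of the canonical free presentation `FreeGroup G → G`. -/
def presentationKernel (G : Type u) [Group G] : Subgroup (FreeGroup G) :=
  (FreeGroup.lift (id : G → G)).ker

/-- The Schur multiplier `M(G) = H₂(G, ℤ)` (second integral group homology) of a
group `G`, realised via Hopf's integral formula `H₂(G, ℤ) ≅ (R ⊓ [F, F]) / [F, R]`,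
where `F = FreeGroup G` is the canonical free group surjecting onto `G` with
kernel `R`. -/
def SchurMultiplier (G : Type u) [Group G] : Type u :=
  ↥(presentationKernel G ⊓ commutator (FreeGroup G)) ⧸
    (⁅(⊤ : Subgroup (FreeGroup G)), presentationKernel G⁆.subgroupOf
      (presentationKernel G ⊓ commutator (FreeGroup G)))

/-- A finite `p`-group `H` is extraspecial if its center, derived subgroup and
Frattini subgroup coincide and have order `p`. -/
def IsExtraspecial (p : ℕ) (H : Type*) [Group H] : Prop :=
  Subgroup.center H = commutator H ∧ Subgroup.center H = frattini H ∧
    Nat.card (Subgroup.center H) = p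

/-- `E` is a group of type `E(2)` (with parameter `m`): a central product of an
extraspecial `p`-group `H` of order `p^(2m+1)` with a cyclic group `K` of order
`p^2`, amalgamated over the center of `H`: `H` and `K` commute elementwise,
`E = HK` and `H ⊓ K = Z(H)`. -/
def IsTypeE2 (p m : ℕ) (E : Type*) [Group E] : Prop :=
  ∃ H K : Subgroup E,
    IsExtraspecial p H ∧ Nat.card H = p ^ (2 * m + 1) ∧
    IsCyclic K ∧ Nat.card K = p ^ 2 ∧
    (∀ h ∈ H, ∀ k ∈ K, h * k = k * h) ∧
    H ⊔ K = ⊤ ∧ (H ⊓ K).subgroupOf H = Subgroup.center H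

/-!
Let `F` be the free group on `E`, with `R` the kernel of `F → E` and `S` the preimage of `E'`.
Hopf's formula gives `|M(E)| |E'| = |F' : [F, R]|`, so it remains to compute this index.

In a group of type `E(2)` there is a central `k` with `E' = ⟨k ^ p⟩`, and `E'` contains all `p`-th
powers. Lift `k` to `κ` in `F / [F, R]`. Commutators with `κ` are central, hence
`[x, κ ^ p] = [x ^ p, κ] = 1` for every `x`. So `S` is central modulo `[F, R]`: `[F, S] = [F, R]`.

Finally `F / S = E / E'` is elementary abelian of rank `n = 2m + 1`, and `F' / [F, S]` is its
exterior square, of order `p ^ (n.choose 2)`: it is generated by the commutators of `n` generators,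
all of order dividing `p`, and a Heisenberg group over `ZMod p` shows that they are independent.
-/

open scoped commutatorElement IsMulCommutative

section CentralCommutators

variable {G : Type*} [Group G]

theorem commutatorElement_pow_left {x y : G} (h : ⁅x, y⁆ ∈ Subgroup.center G) (n : ℕ) :
    ⁅x ^ n, y⁆ = ⁅x, y⁆ ^ n := by
  induction n with
  | zero => simp
  | succ n ih =>
    have hconj : x ^ n * ⁅x, y⁆ * (x ^ n)⁻¹ = ⁅x, y⁆ := by
      rw [Subgroup.mem_center_iff.1 h, mul_inv_cancel_right]
    rw [pow_succ, commutatorElement_mul_left_eq_conj_mul, hconj, ih, pow_succ']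

theorem commute_pow_left_iff_pow_eq_one {x y : G} (h : ⁅x, y⁆ ∈ Subgroup.center G) (n : ℕ) :
    Commute (x ^ n) y ↔ ⁅x, y⁆ ^ n = 1 := by
  rw [← commutatorElement_eq_one_iff_commute, commutatorElement_pow_left h]

theorem commute_pow_right_iff_pow_eq_one {x y : G} (h : ⁅x, y⁆ ∈ Subgroup.center G) (n : ℕ) :
    Commute x (y ^ n) ↔ ⁅x, y⁆ ^ n = 1 := by
  rw [← commutatorElement_inv, inv_mem_iff] at h
  rw [Commute.symm_iff, commute_pow_left_iff_pow_eq_one h, ← commutatorElement_inv,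
    inv_pow, inv_eq_one]

theorem commutator_top_le_ker_iff {Q : Type*} [Group Q] {f : G →* Q}
    (hf : Function.Surjective f) (S : Subgroup G) :
    ⁅(⊤ : Subgroup G), S⁆ ≤ f.ker ↔ S.map f ≤ Subgroup.center Q := by
  rw [← Subgroup.commutator_top_left_eq_bot_iff_le_center, ← Subgroup.map_top_of_surjective f hf,
    ← Subgroup.map_commutator, Subgroup.map_eq_bot_iff]

theorem map_commutator_of_surjective {Q : Type*} [Group Q] {f : G →* Q}
    (hf : Function.Surjective f) : (commutator G).map f = commutator Q := by
  rw [map_commutator_eq, MonoidHom.range_eq_top_of_surjective f hf, commutator_def]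

theorem ker_lift_commutator_top_le_center {Q : Type*} [Group Q] (f : G →* Q) :
    (QuotientGroup.lift ⁅(⊤ : Subgroup G), f.ker⁆ f (Subgroup.commutator_le_right _ _)).ker ≤
      Subgroup.center (G ⧸ ⁅(⊤ : Subgroup G), f.ker⁆) := by
  rw [QuotientGroup.ker_lift, ← commutator_top_le_ker_iff (QuotientGroup.mk'_surjective _),
    QuotientGroup.ker_mk']

theorem commutator_le_of_closure_sup_center_eq_top {s : Set G} {N : Subgroup G} [N.Normal]
    (hs : Subgroup.closure s ⊔ Subgroup.center G = ⊤) (hN : ∀ a ∈ s, ∀ b ∈ s, ⁅a, b⁆ ∈ N) :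
    commutator G ≤ N := by
  let q := QuotientGroup.mk' N
  have hq : Function.Surjective q := QuotientGroup.mk'_surjective N
  have hcenter : Subgroup.center G ≤ (Subgroup.center (G ⧸ N)).comap q :=
    Subgroup.map_le_iff_le_comap.1 <| (commutator_top_le_ker_iff hq _).1 <|
      (Subgroup.commutator_center_right _).trans_le bot_le
  have hcentralizer : ⊤ ≤ (Subgroup.centralizer (q '' s)).comap q := by
    rw [← hs, sup_le_iff, Subgroup.closure_le]
    refine ⟨fun a ha => ?_, hcenter.trans (Subgroup.comap_mono (Subgroup.center_le_centralizer _))⟩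
    rintro _ ⟨b, hb, rfl⟩
    rw [← commutatorElement_eq_one_iff_mul_comm, ← map_commutatorElement]
    exact (QuotientGroup.eq_one_iff _).2 (hN b hb a ha)
  have htop : ⊤ ≤ (Subgroup.center (G ⧸ N)).comap q := by
    rw [← hs, sup_le_iff, Subgroup.closure_le]
    refine ⟨fun a ha => Subgroup.mem_center_iff.2 (hq.forall.2 fun g => ?_), hcenter⟩
    exact (hcentralizer (Subgroup.mem_top g) (q a) ⟨a, ha, rfl⟩).symm
  rw [commutator_def, ← QuotientGroup.ker_mk' N, commutator_top_le_ker_iff hq]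
  exact Subgroup.map_le_iff_le_comap.2 htop

end CentralCommutators

section UpperBound

variable {G : Type*} [Group G] {ι : Type*} {n : ℕ}

theorem card_closure_range_dvd_pow [Fintype ι] {t : ι → G} (hcomm : ∀ i j, Commute (t i) (t j))
    (hpow : ∀ i, t i ^ n = 1) :
    Nat.card (Subgroup.closure (Set.range t)) ∣ n ^ Fintype.card ι := by
  have : IsMulCommutative (Subgroup.closure (Set.range t)) :=
    Subgroup.isMulCommutative_closure <| by
      rintro _ ⟨i, rfl⟩ _ ⟨j, rfl⟩
      exact hcomm i j
  have : Group.FG (Subgroup.closure (Set.range t)) := Group.closure_finite_fg _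
  have hker : ⊤ ≤ (powMonoidHom (α := Subgroup.closure (Set.range t)) n).ker := by
    rw [← Subgroup.closure_closure_coe_preimage, Subgroup.closure_le]
    rintro ⟨_, _⟩ ⟨i, rfl⟩
    exact Subtype.ext (hpow i)
  calc Nat.card (Subgroup.closure (Set.range t))
      ∣ n ^ Group.rank (Subgroup.closure (Set.range t)) :=
        card_dvd_exponent_pow_rank' _ fun g => hker (Subgroup.mem_top g)
    _ ∣ n ^ Fintype.card ι := pow_dvd_pow _ <|
        (Subgroup.rank_closure_finite_le_nat_card _).trans <|
          (Finite.card_range_le t).trans Nat.card_eq_fintype_card.le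

theorem commutator_eq_closure_range [LinearOrder ι] {f : ι → G}
    (hG : commutator G ≤ Subgroup.center G)
    (hf : Subgroup.closure (Set.range f) ⊔ Subgroup.center G = ⊤) :
    commutator G =
      Subgroup.closure (Set.range fun q : {q : ι × ι // q.1 < q.2} => ⁅f q.1.1, f q.1.2⁆) := by
  set C := Subgroup.closure (Set.range fun q : {q : ι × ι // q.1 < q.2} => ⁅f q.1.1, f q.1.2⁆)
  have hC : C ≤ commutator G := by
    rw [Subgroup.closure_le]
    rintro _ ⟨q, rfl⟩
    exact Subgroup.commutator_mem_commutator (Subgroup.mem_top _) (Subgroup.mem_top _)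
  have : C.Normal := by
    rw [← Subgroup.commutator_top_left_le_iff,
      Subgroup.commutator_top_left_eq_bot_iff_le_center.2 (hC.trans hG)]
    exact bot_le
  have hlt {i j : ι} (h : i < j) : ⁅f i, f j⁆ ∈ C := Subgroup.subset_closure ⟨⟨(i, j), h⟩, rfl⟩
  refine le_antisymm (commutator_le_of_closure_sup_center_eq_top hf ?_) hC
  rintro _ ⟨i, rfl⟩ _ ⟨j, rfl⟩
  rcases lt_trichotomy i j with h | rfl | h
  · exact hlt h
  · simp
  · rw [← commutatorElement_inv]
    exact inv_mem (hlt h)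

theorem card_subtype_fst_lt_snd [LinearOrder ι] [Fintype ι] :
    Fintype.card {q : ι × ι // q.1 < q.2} = (Fintype.card ι).choose 2 := by
  rw [← Sym2.card_diagSet_compl]
  refine Fintype.card_of_bijective
    (f := fun q => ⟨s(q.1.1, q.1.2), fun h => q.2.ne (Sym2.mk_isDiag_iff.1 h)⟩) ⟨?_, ?_⟩
  · rintro ⟨⟨i, j⟩, hij : i < j⟩ ⟨⟨k, l⟩, hkl : k < l⟩ h
    rcases Sym2.eq_iff.1 (congrArg Subtype.val h) with ⟨rfl, rfl⟩ | ⟨rfl, rfl⟩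
    · rfl
    · exact (hij.asymm hkl).elim
  · rintro ⟨⟨i, j⟩, h⟩
    rcases lt_or_gt_of_ne (mt Sym2.mk_isDiag_iff.2 h) with hij | hij
    · exact ⟨⟨(i, j), hij⟩, rfl⟩
    · exact ⟨⟨(j, i), hij⟩, Subtype.ext Sym2.eq_swap⟩

theorem card_commutator_dvd_pow [LinearOrder ι] [Fintype ι] {f : ι → G}
    (hG : commutator G ≤ Subgroup.center G)
    (hf : Subgroup.closure (Set.range f) ⊔ Subgroup.center G = ⊤)
    (hpow : ∀ i, f i ^ n ∈ Subgroup.center G) :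
    Nat.card (commutator G) ∣ n ^ (Fintype.card ι).choose 2 := by
  have hcenter (x y : G) : ⁅x, y⁆ ∈ Subgroup.center G :=
    hG (Subgroup.commutator_mem_commutator (Subgroup.mem_top _) (Subgroup.mem_top _))
  rw [commutator_eq_closure_range hG hf, ← card_subtype_fst_lt_snd]
  refine card_closure_range_dvd_pow (fun q r => Subgroup.mem_center_iff.1 (hcenter _ _) _)
    fun q => ?_
  exact (commute_pow_left_iff_pow_eq_one (hcenter _ _) n).1
    (Subgroup.mem_center_iff.1 (hpow _) _).symm

end UpperBound

/-- The Heisenberg group of a biadditive map `B : V × V → W`: the central extension of `V` by `W`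
with cocycle `B`. It detects commutators that survive in a central extension of `V`. -/
@[ext]
structure HeisenbergGroup {V W : Type*} [AddCommGroup V] [AddCommGroup W] (B : V →+ V →+ W) where
  base : V
  fiber : W

namespace HeisenbergGroup

variable {V W : Type*} [AddCommGroup V] [AddCommGroup W] {B : V →+ V →+ W}

instance : Mul (HeisenbergGroup B) :=
  ⟨fun g h => ⟨g.base + h.base, g.fiber + h.fiber + B g.base h.base⟩⟩

instance : One (HeisenbergGroup B) := ⟨⟨0, 0⟩⟩

instance : Inv (HeisenbergGroup B) := ⟨fun g => ⟨-g.base, -g.fiber + B g.base g.base⟩⟩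

@[simp] theorem base_mul (g h : HeisenbergGroup B) : (g * h).base = g.base + h.base := rfl

@[simp] theorem fiber_mul (g h : HeisenbergGroup B) :
    (g * h).fiber = g.fiber + h.fiber + B g.base h.base := rfl

@[simp] theorem base_one : (1 : HeisenbergGroup B).base = 0 := rfl

@[simp] theorem fiber_one : (1 : HeisenbergGroup B).fiber = 0 := rfl

@[simp] theorem base_inv (g : HeisenbergGroup B) : g⁻¹.base = -g.base := rfl

@[simp] theorem fiber_inv (g : HeisenbergGroup B) :
    g⁻¹.fiber = -g.fiber + B g.base g.base := rfl

instance : Group (HeisenbergGroup B) :=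
  Group.ofLeftAxioms
    (fun a b c => by ext <;> simp <;> abel)
    (fun a => by ext <;> simp)
    (fun a => by ext <;> simp)

/-- The projection of the Heisenberg group onto `V`, whose kernel is the central copy of `W`. -/
def proj (B : V →+ V →+ W) : HeisenbergGroup B →* Multiplicative V where
  toFun g := .ofAdd g.base
  map_one' := rfl
  map_mul' _ _ := rfl

/-- The inclusion of the central subgroup `W` into the Heisenberg group. -/
def incl (B : V →+ V →+ W) : Multiplicative W →* HeisenbergGroup B where
  toFun w := ⟨0, w.toAdd⟩
  map_one' := rfl
  map_mul' _ _ := by ext <;> simp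

theorem incl_injective : Function.Injective (incl B) :=
  fun _ _ h => congrArg (Multiplicative.ofAdd ∘ fiber) h

theorem commutatorElement_eq (g h : HeisenbergGroup B) :
    ⁅g, h⁆ = incl B (.ofAdd (B g.base h.base - B h.base g.base)) := by
  rw [commutatorElement_def, mul_inv_eq_iff_eq_mul, mul_inv_eq_iff_eq_mul]
  ext <;> simp [incl] <;> abel

theorem exists_lift_freeGroup {X : Type*} (φ : FreeGroup X →* Multiplicative V) :
    ∃ ψ : FreeGroup X →* HeisenbergGroup B, (proj B).comp ψ = φ :=
  ⟨FreeGroup.lift fun x => ⟨(φ (.of x)).toAdd, 0⟩, by ext; simp [proj]⟩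

section Lift

variable {G : Type*} [Group G] {ψ : G →* HeisenbergGroup B}

theorem commutator_top_ker_le_ker :
    ⁅(⊤ : Subgroup G), ((proj B).comp ψ).ker⁆ ≤ ψ.ker := by
  refine Subgroup.commutator_le.2 fun g _ s hs => ?_
  have hbase : (ψ s).base = 0 := congrArg Multiplicative.toAdd hs
  simp [MonoidHom.mem_ker, map_commutatorElement, commutatorElement_eq, hbase]

theorem range_incl_le_map_commutator (hψ : Function.Surjective ((proj B).comp ψ))
    (hB : AddSubgroup.closure {w | ∃ x y, B x y - B y x = w} = ⊤) :
    (incl B).range ≤ (commutator G).map ψ := by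
  have hle : AddSubgroup.closure {w | ∃ x y, B x y - B y x = w} ≤
      (((commutator G).map ψ).comap (incl B)).toAddSubgroup' := by
    rw [AddSubgroup.closure_le]
    rintro _ ⟨x, y, rfl⟩
    obtain ⟨g, hg⟩ := hψ (.ofAdd x)
    obtain ⟨h, hh⟩ := hψ (.ofAdd y)
    obtain rfl : (ψ g).base = x := congrArg Multiplicative.toAdd hg
    obtain rfl : (ψ h).base = y := congrArg Multiplicative.toAdd hh
    refine ⟨⁅g, h⁆, Subgroup.commutator_mem_commutator trivial trivial, ?_⟩
    rw [map_commutatorElement, commutatorElement_eq]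
    rfl
  rintro _ ⟨w, rfl⟩
  exact hle (hB ▸ AddSubgroup.mem_top w.toAdd)

end Lift

theorem card_dvd_relIndex_commutator {X : Type*} {φ : FreeGroup X →* Multiplicative V}
    (hφ : Function.Surjective φ)
    (hB : AddSubgroup.closure {w | ∃ x y, B x y - B y x = w} = ⊤) :
    Nat.card W ∣ ⁅(⊤ : Subgroup (FreeGroup X)), φ.ker⁆.relIndex (commutator (FreeGroup X)) := by
  obtain ⟨ψ, rfl⟩ := exists_lift_freeGroup (B := B) φ
  calc Nat.card W = Nat.card (incl B).range :=
        Nat.card_congr (Multiplicative.ofAdd.trans (MonoidHom.ofInjective incl_injective).toEquiv)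
    _ ∣ Nat.card ((commutator (FreeGroup X)).map ψ) :=
        Subgroup.card_dvd_of_le (range_incl_le_map_commutator hφ hB)
    _ = ψ.ker.relIndex (commutator (FreeGroup X)) := (Subgroup.relIndex_ker _ ψ).symm
    _ ∣ _ := Subgroup.relIndex_dvd_of_le_left _ commutator_top_ker_le_ker

end HeisenbergGroup

section Coordinates

variable {ι : Type*} [LinearOrder ι]

/-- The biadditive map `(x, y) ↦ (xᵢ yⱼ)_{i < j}`; its antisymmetrisation is the universal
alternating map `(x, y) ↦ x ∧ y` in coordinates. -/
def upperTriangularForm (ι R : Type*) [LinearOrder ι] [NonUnitalNonAssocRing R] :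
    (ι → R) →+ (ι → R) →+ ({q : ι × ι // q.1 < q.2} → R) :=
  .mk' (fun x => .mk' (fun y q => x q.1.1 * y q.1.2) fun y z => by ext; simp [mul_add])
    fun x y => by ext; simp [add_mul]

theorem upperTriangularForm_single_sub {R : Type*} [NonAssocRing R]
    (q : {q : ι × ι // q.1 < q.2}) (c : R) :
    upperTriangularForm ι R (Pi.single q.1.1 c) (Pi.single q.1.2 1) -
      upperTriangularForm ι R (Pi.single q.1.2 1) (Pi.single q.1.1 c) = Pi.single q c := by
  obtain ⟨⟨i, j⟩, hij : i < j⟩ := q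
  ext ⟨⟨k, l⟩, hkl : k < l⟩
  have hji : ¬ (k = j ∧ l = i) := by
    rintro ⟨rfl, rfl⟩
    exact hij.asymm hkl
  simp [upperTriangularForm, Pi.single_apply, ← ite_and, hji]

theorem closure_upperTriangularForm_sub_eq_top [Finite ι] {R : Type*} [NonAssocRing R] :
    AddSubgroup.closure {w | ∃ x y, upperTriangularForm ι R x y - upperTriangularForm ι R y x = w} =
      ⊤ := by
  refine eq_top_iff.2 fun w _ => AddSubgroup.pi_mem_of_single_mem w fun q => ?_
  exact AddSubgroup.subset_closure ⟨_, _, upperTriangularForm_single_sub q (w q)⟩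

theorem closure_range_single_one_eq_top {ι : Type*} [Finite ι] [DecidableEq ι] (n : ℕ) :
    AddSubgroup.closure (Set.range fun i : ι => (Pi.single i 1 : ι → ZMod n)) = ⊤ := by
  refine eq_top_iff.2 fun w _ => AddSubgroup.pi_mem_of_single_mem w fun i => ?_
  obtain ⟨c, hc⟩ := ZMod.intCast_surjective (w i)
  have hsingle : Pi.single i (w i) = c • (Pi.single i 1 : ι → ZMod n) := by
    rw [← Pi.single_smul, zsmul_one, hc]
  rw [hsingle]
  exact zsmul_mem (AddSubgroup.subset_closure (Set.mem_range_self i)) c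

end Coordinates

section FreeCentralExtension

variable {ι : Type*} {n : ℕ}

theorem closure_range_sup_ker_eq_top {G : Type*} [Group G] [Finite ι] [DecidableEq ι]
    {φ : G →* Multiplicative (ι → ZMod n)} {f : ι → G}
    (hf : ∀ i, φ (f i) = .ofAdd (Pi.single i 1)) :
    Subgroup.closure (Set.range f) ⊔ φ.ker = ⊤ := by
  have hle : AddSubgroup.closure (Set.range fun i : ι => (Pi.single i 1 : ι → ZMod n)) ≤
      ((Subgroup.closure (Set.range f)).map φ).toAddSubgroup' := by
    rw [AddSubgroup.closure_le]
    rintro _ ⟨i, rfl⟩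
    exact ⟨f i, Subgroup.subset_closure (Set.mem_range_self i), hf i⟩
  rw [← Subgroup.comap_map_eq, eq_top_iff]
  intro g _
  exact hle (closure_range_single_one_eq_top (ι := ι) n ▸ AddSubgroup.mem_top (φ g).toAdd)

theorem multiplicative_pi_zmod_pow_eq_one (v : Multiplicative (ι → ZMod n)) :
    v ^ n = 1 :=
  Multiplicative.toAdd.injective (by ext; simp)

theorem card_commutator_dvd_pow_of_ker_le_center [Fintype ι] {Q : Type*} [Group Q]
    {φ : Q →* Multiplicative (ι → ZMod n)} (hφ : Function.Surjective φ)
    (hker : φ.ker ≤ Subgroup.center Q) :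
    Nat.card (commutator Q) ∣ n ^ (Fintype.card ι).choose 2 := by
  classical
  let _ : LinearOrder ι := linearOrderOfSTO WellOrderingRel
  choose f hf using fun i : ι => hφ (.ofAdd (Pi.single i 1))
  refine card_commutator_dvd_pow (f := f)
    ((Abelianization.commutator_subset_ker φ).trans hker) ?_ fun i => hker ?_
  · exact eq_top_mono (sup_le_sup_left hker _) (closure_range_sup_ker_eq_top hf)
  · rw [MonoidHom.mem_ker, map_pow, multiplicative_pi_zmod_pow_eq_one]

theorem relIndex_commutator_ker [Fintype ι] {X : Type*}
    {φ : FreeGroup X →* Multiplicative (ι → ZMod n)} (hφ : Function.Surjective φ) :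
    ⁅(⊤ : Subgroup (FreeGroup X)), φ.ker⁆.relIndex (commutator (FreeGroup X)) =
      n ^ (Fintype.card ι).choose 2 := by
  classical
  let _ : LinearOrder ι := linearOrderOfSTO WellOrderingRel
  refine Nat.dvd_antisymm ?_ ?_
  · let N := ⁅(⊤ : Subgroup (FreeGroup X)), φ.ker⁆
    have hdvd := card_commutator_dvd_pow_of_ker_le_center
      (QuotientGroup.lift_surjective_of_surjective N φ hφ _)
      (ker_lift_commutator_top_le_center φ)
    rwa [← map_commutator_of_surjective (QuotientGroup.mk'_surjective N), ← Subgroup.relIndex_ker,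
      QuotientGroup.ker_mk'] at hdvd
  · have hcard : Nat.card ({q : ι × ι // q.1 < q.2} → ZMod n) = n ^ (Fintype.card ι).choose 2 := by
      rw [Nat.card_fun, Nat.card_zmod, Nat.card_eq_fintype_card, card_subtype_fst_lt_snd]
    rw [← hcard]
    exact HeisenbergGroup.card_dvd_relIndex_commutator hφ closure_upperTriangularForm_sub_eq_top

end FreeCentralExtension

section CentralExtension

variable {Q E : Type*} [Group Q] [Group E] {π : Q →* E} {k : E} {n : ℕ}

theorem comap_zpowers_pow_le_center (hπ : Function.Surjective π)
    (hker : π.ker ≤ Subgroup.center Q) (hk : k ∈ Subgroup.center E)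
    (hpow : ∀ x : E, x ^ n ∈ Subgroup.zpowers (k ^ n)) :
    (Subgroup.zpowers (k ^ n)).comap π ≤ Subgroup.center Q := by
  obtain ⟨κ, rfl⟩ := hπ k
  have hcomap : (Subgroup.zpowers (π κ ^ n)).comap π = Subgroup.zpowers (κ ^ n) ⊔ π.ker := by
    rw [← Subgroup.comap_map_eq, MonoidHom.map_zpowers, map_pow]
  have hcommute (x : Q) : Commute (x ^ n) κ := by
    have hle : Subgroup.zpowers (κ ^ n) ⊔ π.ker ≤ Subgroup.centralizer {κ} :=
      sup_le (Subgroup.zpowers_le.2 (Subgroup.mem_centralizer_singleton_iff.2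
        (Commute.refl κ |>.pow_left n))) (hker.trans (Subgroup.center_le_centralizer _))
    refine Subgroup.mem_centralizer_singleton_iff.1 (hle (hcomap ▸ ?_))
    rw [Subgroup.mem_comap, map_pow]
    exact hpow (π x)
  have hcenter (x : Q) : ⁅x, κ⁆ ∈ Subgroup.center Q := by
    refine hker ?_
    rw [MonoidHom.mem_ker, map_commutatorElement, commutatorElement_eq_one_iff_mul_comm]
    exact Subgroup.mem_center_iff.1 hk (π x)
  rw [hcomap, sup_le_iff, Subgroup.zpowers_le, Subgroup.mem_center_iff]
  refine ⟨fun x => (commute_pow_right_iff_pow_eq_one (hcenter x) n).2 ?_, hker⟩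
  exact (commute_pow_left_iff_pow_eq_one (hcenter x) n).1 (hcommute x)

theorem commutator_top_comap_zpowers_pow (hπ : Function.Surjective π)
    (hk : k ∈ Subgroup.center E) (hpow : ∀ x : E, x ^ n ∈ Subgroup.zpowers (k ^ n)) :
    ⁅(⊤ : Subgroup Q), (Subgroup.zpowers (k ^ n)).comap π⁆ = ⁅(⊤ : Subgroup Q), π.ker⁆ := by
  let N := ⁅(⊤ : Subgroup Q), π.ker⁆
  let π' := QuotientGroup.lift N π (Subgroup.commutator_le_right _ _)
  have hπ' : Function.Surjective π' := QuotientGroup.lift_surjective_of_surjective N π hπ _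
  refine le_antisymm ?_ (Subgroup.commutator_mono le_rfl (Subgroup.ker_le_comap π _))
  rw [← QuotientGroup.ker_mk' ⁅(⊤ : Subgroup Q), π.ker⁆,
    commutator_top_le_ker_iff (QuotientGroup.mk'_surjective N), Subgroup.map_le_iff_le_comap]
  exact Subgroup.comap_mono (f := QuotientGroup.mk' N)
    (comap_zpowers_pow_le_center hπ' (ker_lift_commutator_top_le_center π) hk hpow)

end CentralExtension

theorem card_schurMultiplier_mul_card_commutator (G : Type*) [Group G] :
    Nat.card (SchurMultiplier G) * Nat.card (commutator G) =
      ⁅(⊤ : Subgroup (FreeGroup G)), presentationKernel G⁆.relIndex (commutator (FreeGroup G)) := by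
  have hπ : Function.Surjective (FreeGroup.lift (id : G → G)) :=
    FreeGroup.lift_surjective_of_surjective Function.surjective_id
  have : (presentationKernel G).Normal := MonoidHom.normal_ker _
  calc Nat.card (SchurMultiplier G) * Nat.card (commutator G)
      = ⁅(⊤ : Subgroup (FreeGroup G)), presentationKernel G⁆.relIndex
            (presentationKernel G ⊓ commutator (FreeGroup G)) *
          (presentationKernel G ⊓ commutator (FreeGroup G)).relIndex
            (commutator (FreeGroup G)) := by
        rw [Subgroup.inf_relIndex_right, presentationKernel, Subgroup.relIndex_ker,
          map_commutator_of_surjective hπ]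
        rfl
    _ = _ := Subgroup.relIndex_mul_relIndex _ _ _
        (le_inf (Subgroup.commutator_le_right _ _) (Subgroup.commutator_mono le_rfl le_top))
        inf_le_right

theorem card_schurMultiplier_mul_card_commutator_eq_pow {G ι : Type*} [Group G] [Fintype ι] {n : ℕ}
    (e : Abelianization G ≃* Multiplicative (ι → ZMod n)) {k : G} (hk : k ∈ Subgroup.center G)
    (hG : commutator G = Subgroup.zpowers (k ^ n)) :
    Nat.card (SchurMultiplier G) * Nat.card (commutator G) = n ^ (Fintype.card ι).choose 2 := by
  let π : FreeGroup G →* G := FreeGroup.lift id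
  have hπ : Function.Surjective π :=
    FreeGroup.lift_surjective_of_surjective Function.surjective_id
  let ab : G →* Multiplicative (ι → ZMod n) := (e : Abelianization G →* _).comp Abelianization.of
  have hab : ab.ker = commutator G :=
    (MonoidHom.ker_mulEquiv_comp _ e).trans (Abelianization.ker_of G)
  have hpow (x : G) : x ^ n ∈ Subgroup.zpowers (k ^ n) := by
    rw [← hG, ← hab, MonoidHom.mem_ker, map_pow, multiplicative_pi_zmod_pow_eq_one]
  have hker : (ab.comp π).ker = (Subgroup.zpowers (k ^ n)).comap π := by
    rw [← MonoidHom.comap_ker, hab, hG]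
  rw [card_schurMultiplier_mul_card_commutator, presentationKernel,
    ← commutator_top_comap_zpowers_pow hπ hk hpow, ← hker]
  exact relIndex_commutator_ker ((e.surjective.comp (QuotientGroup.mk'_surjective _)).comp hπ)

theorem nonempty_addEquiv_pi_zmod {p r : ℕ} [Fact p.Prime] {V : Type*} [AddCommGroup V]
    (hsmul : ∀ v : V, p • v = 0) (hcard : Nat.card V = p ^ r) :
    Nonempty (V ≃+ (Fin r → ZMod p)) := by
  have hp : p.Prime := Fact.out
  have : Finite V := Nat.finite_of_card_ne_zero (hcard.trans_ne (pow_ne_zero r hp.ne_zero))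
  have : Module (ZMod p) V := AddCommGroup.zmodModule hsmul
  have : Module.Finite (ZMod p) V := .of_finite
  have hrank : Module.finrank (ZMod p) V = r :=
    Nat.pow_right_injective hp.two_le <| (FiniteField.pow_finrank_eq_natCard p V).trans hcard
  exact ⟨(Module.finBasisOfFinrankEq (ZMod p) V hrank).equivFun.toAddEquiv⟩

theorem zpowers_pow_relIndex {G : Type*} [Group G] {g : G} {L : Subgroup G}
    (hL : L ≤ Subgroup.zpowers g) (hg : IsOfFinOrder g) :
    Subgroup.zpowers (g ^ L.relIndex (Subgroup.zpowers g)) = L := by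
  have hcard : Nat.card L * L.relIndex (Subgroup.zpowers g) = orderOf g := by
    rw [← Nat.card_zpowers, ← Subgroup.relIndex_bot_left, ← Subgroup.relIndex_bot_left,
      Subgroup.relIndex_mul_relIndex _ _ _ bot_le hL]
  have hpos : Nat.card L ≠ 0 ∧ L.relIndex (Subgroup.zpowers g) ≠ 0 :=
    mul_ne_zero_iff.1 (hcard.trans_ne hg.orderOf_pos.ne')
  have : Finite L := Nat.finite_of_card_ne_zero hpos.1
  refine Subgroup.eq_of_le_of_card_ge ?_ ?_
  · exact Subgroup.zpowers_le.2 <|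
      (L.subgroupOf (Subgroup.zpowers g)).pow_index_mem ⟨g, Subgroup.mem_zpowers g⟩
  · rw [Nat.card_zpowers, orderOf_pow_of_dvd hpos.2 (Dvd.intro_left _ hcard), ← hcard,
      Nat.mul_div_cancel _ (Nat.pos_of_ne_zero hpos.2)]

section CentralProduct

variable {G : Type*} [Group G]

theorem le_center_of_sup_eq_top {H K : Subgroup G} [IsMulCommutative K]
    (hcomm : K ≤ Subgroup.centralizer H) (hsup : H ⊔ K = ⊤) : K ≤ Subgroup.center G := by
  have htop : H ⊔ K ≤ Subgroup.centralizer K :=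
    sup_le (Subgroup.le_centralizer_iff.1 hcomm) (Subgroup.le_centralizer K)
  rw [← Subgroup.centralizer_univ, ← Subgroup.coe_top, ← hsup]
  exact Subgroup.le_centralizer_iff.1 htop

theorem commutator_eq_of_sup_center_eq_top {H : Subgroup G} (hH : H ⊔ Subgroup.center G = ⊤) :
    commutator G = ⁅H, H⁆ := by
  have : H.Normal := Subgroup.normalizer_eq_top_iff.1 <|
    eq_top_mono (sup_le Subgroup.le_normalizer (Subgroup.center_le_normalizer _)) hH
  refine le_antisymm ?_ (Subgroup.commutator_mono le_top le_top)
  refine commutator_le_of_closure_sup_center_eq_top (s := H) (by rwa [Subgroup.closure_eq]) ?_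
  exact fun a ha b hb => Subgroup.commutator_mem_commutator ha hb

theorem abelianization_pow_eq_one_of_sup_eq_top {H K : Subgroup G} {n : ℕ} (hsup : H ⊔ K = ⊤)
    (hH : ∀ h ∈ H, h ^ n ∈ commutator G) (hK : ∀ k ∈ K, k ^ n ∈ commutator G)
    (v : Abelianization G) : v ^ n = 1 := by
  have hker (g : G) : g ∈ ((powMonoidHom n).comp Abelianization.of).ker ↔ g ^ n ∈ commutator G := by
    rw [← Abelianization.ker_of, MonoidHom.mem_ker, MonoidHom.mem_ker, map_pow]
    rfl
  have hle : H ⊔ K ≤ ((powMonoidHom n).comp Abelianization.of).ker :=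
    sup_le (fun h hh => (hker h).2 (hH h hh)) fun k hk => (hker k).2 (hK k hk)
  obtain ⟨g, rfl⟩ := QuotientGroup.mk_surjective v
  exact hle (hsup ▸ Subgroup.mem_top g)

end CentralProduct

theorem IsExtraspecial.pow_mem_center {p : ℕ} {H : Type*} [Group H] (hH : IsExtraspecial p H)
    (x : H) : x ^ p ∈ Subgroup.center H := by
  refine Subgroup.mem_center_iff.2 fun y => Eq.symm ?_
  have hmem : ⁅x, y⁆ ∈ Subgroup.center H :=
    hH.1 ▸ Subgroup.commutator_mem_commutator (Subgroup.mem_top _) (Subgroup.mem_top _)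
  refine (commute_pow_left_iff_pow_eq_one hmem p).2 ?_
  rw [← hH.2.2]
  exact congrArg Subtype.val (pow_card_eq_one' (x := (⟨_, hmem⟩ : Subgroup.center H)))

namespace IsTypeE2

variable {p m : ℕ} {E : Type*} [Group E]

theorem exists_factors (hE : IsTypeE2 p m E) :
    ∃ H K : Subgroup E, IsExtraspecial p H ∧ IsCyclic K ∧ Nat.card K = p ^ 2 ∧
      K ≤ Subgroup.center E ∧ H ⊔ K = ⊤ ∧
      commutator E = (Subgroup.center H).map H.subtype ∧ commutator E ≤ K := by
  obtain ⟨H, K, hH, -, hKcyclic, hKcard, hcomm, hsup, hinf⟩ := hE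
  have hK : K ≤ Subgroup.center E :=
    le_center_of_sup_eq_top (fun k hk h hh => hcomm h hh k hk) hsup
  have hcommutator : commutator E = (Subgroup.center H).map H.subtype := by
    rw [commutator_eq_of_sup_center_eq_top (eq_top_mono (sup_le_sup_left hK H) hsup), hH.1,
      Subgroup.map_subtype_commutator]
  refine ⟨H, K, hH, hKcyclic, hKcard, hK, hsup, hcommutator, ?_⟩
  rw [hcommutator, ← hinf, Subgroup.subgroupOf_map_subtype]
  exact inf_le_left.trans inf_le_right

theorem card_commutator (hE : IsTypeE2 p m E) : Nat.card (commutator E) = p := by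
  obtain ⟨H, K, hH, -, -, -, -, hcommutator, -⟩ := hE.exists_factors
  rw [hcommutator, Subgroup.card_map_of_injective H.subtype_injective, hH.2.2]

theorem relIndex_commutator (hp : p.Prime) (hE : IsTypeE2 p m E) {K : Subgroup E}
    (hKcard : Nat.card K = p ^ 2) (hK : commutator E ≤ K) : (commutator E).relIndex K = p := by
  have hmul := Subgroup.relIndex_mul_relIndex ⊥ _ _ bot_le hK
  simp only [Subgroup.relIndex_bot_left, hE.card_commutator, hKcard, sq] at hmul
  exact Nat.eq_of_mul_eq_mul_left hp.pos hmul

theorem exists_commutator_eq_zpowers_pow (hp : p.Prime) (hE : IsTypeE2 p m E) :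
    ∃ k ∈ Subgroup.center E, commutator E = Subgroup.zpowers (k ^ p) := by
  obtain ⟨H, K, -, hKcyclic, hKcard, hKcenter, -, -, hle⟩ := hE.exists_factors
  obtain ⟨k, rfl⟩ := (Subgroup.isCyclic_iff_exists_zpowers_eq_top K).1 hKcyclic
  have hk : IsOfFinOrder k := by
    rw [← orderOf_pos_iff, ← Nat.card_zpowers, hKcard]
    exact pow_pos hp.pos 2
  refine ⟨k, hKcenter (Subgroup.mem_zpowers k), ?_⟩
  rw [← hE.relIndex_commutator hp hKcard hle, zpowers_pow_relIndex hle hk]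

theorem abelianization_pow_eq_one (hp : p.Prime) (hE : IsTypeE2 p m E) (v : Abelianization E) :
    v ^ p = 1 := by
  obtain ⟨H, K, hH, -, hKcard, -, hsup, hcommutator, hle⟩ := hE.exists_factors
  refine abelianization_pow_eq_one_of_sup_eq_top hsup (fun h hh => ?_) (fun k hk => ?_) v
  · rw [hcommutator]
    exact ⟨⟨h, hh⟩ ^ p, hH.pow_mem_center _, rfl⟩
  · rw [← hE.relIndex_commutator hp hKcard hle]
    exact (commutator E).pow_relIndex_mem hk

theorem card_abelianization (hp : p.Prime) (hE : IsTypeE2 p m E)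
    (hcard : Nat.card E = p ^ (2 * m + 2)) : Nat.card (Abelianization E) = p ^ (2 * m + 1) := by
  have hmul := (commutator E).card_mul_index
  rw [hE.card_commutator, hcard, pow_succ' p (2 * m + 1)] at hmul
  exact Nat.eq_of_mul_eq_mul_left hp.pos hmul

end IsTypeE2

/-- The Schur multiplier of a group of type `E(2)` of order `p^(2m+2)` has order
`p^(2m² + m - 1)`. -/
theorem schurMultiplier_typeE2 {p m : ℕ} (hp : p.Prime) {E : Type*} [Group E]
    (hE : IsTypeE2 p m E) (hEcard : Nat.card E = p ^ (2 * m + 2)) :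
    Nat.card (SchurMultiplier E) = p ^ (2 * m ^ 2 + m - 1) := by
  have : Fact p.Prime := ⟨hp⟩
  obtain ⟨k, hk, hcommutator⟩ := hE.exists_commutator_eq_zpowers_pow hp
  obtain ⟨e⟩ := nonempty_addEquiv_pi_zmod (V := Additive (Abelianization E))
    (hE.abelianization_pow_eq_one hp) (hE.card_abelianization hp hEcard)
  have hchoose : (2 * m + 1).choose 2 = 2 * m ^ 2 + m := by
    rw [Nat.choose_two_right, Nat.add_sub_cancel, Nat.div_eq_of_eq_mul_left two_pos]
    ring
  have hmul : Nat.card (SchurMultiplier E) * p = p ^ (2 * m ^ 2 + m) := by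
    rw [← hchoose, ← Fintype.card_fin (2 * m + 1),
      ← card_schurMultiplier_mul_card_commutator_eq_pow e.toMultiplicativeRight hk hcommutator,
      hE.card_commutator]
  have hm : 2 * m ^ 2 + m ≠ 0 := by
    intro h
    rw [h, pow_zero] at hmul
    exact hp.ne_one (Nat.eq_one_of_mul_eq_one_left hmul)
  rw [← Nat.sub_one_add_one hm, pow_succ] at hmul
  exact Nat.eq_of_mul_eq_mul_right hp.pos hmul
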